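/- arXiv:2404.16584 — 10 statements merged into one kernel-verified Lean document; each statement's English description precedes it below -/
import Mathlib

section
/- Let T > 0. The function u(t,q,p) = (2/3)(q² + p² + qp − 2) e^{−(T−t)} + (1/3)(q² − 2p² − 2qp + 1) e^{−(T−t)} cos(√3 (T−t)) + (1/√3)(2qp + q² − 1) e^{−(T−t)} sin(√3 (T−t)) satisfies ∂u/∂t + p ∂u/∂q − q ∂u/∂p − p ∂u/∂p + ∂²u/∂p² = 0 for all (t,q,p) ∈ (0,T) × (0,∞) × ℝ, the terminal condition u(T,q,p) = q² − 1 for all q > 0 and p ∈ ℝ, and the specular boundary condition u(t,0,p) = u(t,0,−p) for all t ∈ (0,T) and p ∈ ℝ. -/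
/-- Explicit solution of the one-dimensional backward Kolmogorov equation
`∂u/∂t + p ∂u/∂q − q ∂u/∂p − p ∂u/∂p + ∂²u/∂p² = 0` on `(0,T) × (0,∞) × ℝ`
with terminal condition `u(T,q,p) = q² − 1` and specular boundary condition
`u(t,0,p) = u(t,0,−p)`. -/
theorem stmt3 (T : ℝ) (hT : 0 < T)
    (u : ℝ → ℝ → ℝ → ℝ)
    (hu : ∀ t q p, u t q p =
      (2 / 3) * (q ^ 2 + p ^ 2 + q * p - 2) * Real.exp (-(T - t))
      + (1 / 3) * (q ^ 2 - 2 * p ^ 2 - 2 * q * p + 1) * Real.exp (-(T - t))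
          * Real.cos (Real.sqrt 3 * (T - t))
      + (1 / Real.sqrt 3) * (2 * q * p + q ^ 2 - 1) * Real.exp (-(T - t))
          * Real.sin (Real.sqrt 3 * (T - t))) :
    (∀ t ∈ Set.Ioo (0 : ℝ) T, ∀ q ∈ Set.Ioi (0 : ℝ), ∀ p : ℝ,
      deriv (fun s => u s q p) t
        + p * deriv (fun y => u t y p) q
        - q * deriv (u t q) p
        - p * deriv (u t q) p
        + deriv (deriv (u t q)) p = 0)
    ∧ (∀ q ∈ Set.Ioi (0 : ℝ), ∀ p : ℝ, u T q p = q ^ 2 - 1)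
    ∧ (∀ t ∈ Set.Ioo (0 : ℝ) T, ∀ p : ℝ, u t 0 p = u t 0 (-p)) := by
  have h3 : Real.sqrt 3 * Real.sqrt 3 = 3 := Real.mul_self_sqrt (by norm_num)
  have hne : Real.sqrt 3 ≠ 0 := by positivity
  have hinv : 1 / Real.sqrt 3 = Real.sqrt 3 / 3 := by
    field_simp
    nlinarith [h3]
  rw [hinv] at hu
  generalize Real.sqrt 3 = r at *
  refine ⟨?_, ?_, ?_⟩
  · intro t _ q _ p
    have hτ : HasDerivAt (fun s : ℝ => T - s) (-1) t := by
      simpa using (hasDerivAt_id t).const_sub T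
    have hE := hτ.fun_neg.exp
    have hC := (hτ.const_mul r).cos
    have hS := (hτ.const_mul r).sin
    have ht := (((hE.const_mul ((2 / 3) * (q ^ 2 + p ^ 2 + q * p - 2))).fun_add
      ((hE.const_mul ((1 / 3) * (q ^ 2 - 2 * p ^ 2 - 2 * q * p + 1))).fun_mul hC)).fun_add
      ((hE.const_mul ((r / 3) * (2 * q * p + q ^ 2 - 1))).fun_mul hS))
    have e1 : (fun s => u s q p) = _ := funext fun s => hu s q p
    rw [e1, ht.deriv]
    generalize hEE : Real.exp (-(T - t)) = E at *
    generalize hCC : Real.cos (r * (T - t)) = c at *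
    generalize hSS : Real.sin (r * (T - t)) = d at *
    have quad : ∀ a b k x : ℝ, HasDerivAt (fun y : ℝ => a * y ^ 2 + b * y + k)
        (2 * a * x + b) x := by
      intro a b k x
      have := (((hasDerivAt_pow 2 x).const_mul a).fun_add
        ((hasDerivAt_id' x).const_mul b)).add_const k
      have hv : a * (((2 : ℕ) : ℝ) * x ^ (2 - 1)) + b * 1 = 2 * a * x + b := by
        norm_num
        ring
      exact hv ▸ this
    have e2 : (fun y => u t y p) = fun y =>
        (2 / 3 * E + 1 / 3 * E * c + r / 3 * E * d) * y ^ 2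
        + (2 / 3 * E * p - 2 / 3 * E * c * p + 2 * r / 3 * E * d * p) * y
        + (2 / 3 * (p ^ 2 - 2) * E + 1 / 3 * (1 - 2 * p ^ 2) * E * c - r / 3 * E * d) := by
      funext y
      rw [hu, hEE, hCC, hSS]
      ring
    have e3 : u t q = fun y =>
        (2 / 3 * E - 2 / 3 * E * c) * y ^ 2
        + (2 / 3 * E * q - 2 / 3 * E * c * q + 2 * r / 3 * E * d * q) * y
        + (2 / 3 * (q ^ 2 - 2) * E + 1 / 3 * (q ^ 2 + 1) * E * c
          + r / 3 * (q ^ 2 - 1) * E * d) := by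
      funext y
      rw [hu, hEE, hCC, hSS]
      ring
    have e4 : deriv (u t q) = fun y => 0 * y ^ 2 + (2 * (2 / 3 * E - 2 / 3 * E * c)) * y
        + (2 / 3 * E * q - 2 / 3 * E * c * q + 2 * r / 3 * E * d * q) := by
      funext y
      rw [e3, (quad _ _ _ _).deriv]
      ring
    rw [e4, (quad _ _ _ _).deriv, e2, (quad _ _ _ _).deriv]
    linear_combination (-(1 / 3) * (2 * q * p + q ^ 2 - 1) * E * c) * h3
  · intro q _ p
    rw [hu]
    simp
    ring
  · intro t _ p
    rw [hu, hu]
    ring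
end

section
/- Let γ > 0 and t > 0 be such that the covariance matrix Σ(t) is invertible. Then for all p, q₀, p₀ ∈ ℝ, the Gaussian fundamental solution satisfies the method-of-images identity F(t, 1, p; q₀, p₀) = F(t, 1, −p; 2 − q₀, −p₀). -/
open Matrix in
/-- Covariance matrix `Σ(t)` of the Gaussian fundamental solution of the kinetic
Fokker–Planck equation of 1D Langevin dynamics with constant potential and `β = 1`. -/
noncomputable def covMat (γ t : ℝ) : Matrix (Fin 2) (Fin 2) ℝ :=
  !![(2 / γ ^ 2) * (γ * t - 3 / 2 + 2 * Real.exp (-γ * t) - Real.exp (-2 * γ * t) / 2),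
     (1 - Real.exp (-γ * t)) ^ 2 / γ;
     (1 - Real.exp (-γ * t)) ^ 2 / γ,
     1 - Real.exp (-2 * γ * t)]

/-- Mean vector `M(t,q₀,p₀)` of the Gaussian fundamental solution. -/
noncomputable def meanVec (γ t q₀ p₀ : ℝ) : Fin 2 → ℝ :=
  ![q₀ + p₀ * (1 - Real.exp (-γ * t)) / γ, p₀ * Real.exp (-γ * t)]

open Matrix in
/-- The Gaussian fundamental solution
`F(t,q,p;q₀,p₀) = (2π √(det Σ(t)))⁻¹ exp(−½ (z−M)ᵀ Σ(t)⁻¹ (z−M))` with `z = (q,p)`. -/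
noncomputable def Fsol (γ t q p q₀ p₀ : ℝ) : ℝ :=
  (2 * Real.pi * Real.sqrt (covMat γ t).det)⁻¹ *
    Real.exp (-(1 / 2) *
      ((![q, p] - meanVec γ t q₀ p₀) ⬝ᵥ ((covMat γ t)⁻¹ *ᵥ (![q, p] - meanVec γ t q₀ p₀))))

/-- Method-of-images identity `F(t, 1, p; q₀, p₀) = F(t, 1, −p; 2 − q₀, −p₀)` for the
Gaussian fundamental solution, when the covariance matrix `Σ(t)` is invertible. -/
theorem stmt5 (γ t : ℝ) (hγ : 0 < γ) (ht : 0 < t) (hdet : IsUnit (covMat γ t).det)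
    (p q₀ p₀ : ℝ) :
    Fsol γ t 1 p q₀ p₀ = Fsol γ t 1 (-p) (2 - q₀) (-p₀) := by
  have h : ![1, -p] - meanVec γ t (2 - q₀) (-p₀) = -(![1, p] - meanVec γ t q₀ p₀) := by
    ext i
    fin_cases i
    · simp [meanVec]; ring
    · simp [meanVec]; ring
  unfold Fsol
  rw [h, Matrix.mulVec_neg, neg_dotProduct_neg]
end

section
/- Let γ > 0 and fix (q₀, p₀) ∈ ℝ². For all t > 0 the covariance matrix Σ(t) is invertible, and the function (t,q,p) ↦ F(t,q,p;q₀,p₀) satisfies the kinetic Fokker–Planck equation ∂F/∂t = −p ∂F/∂q + γ ∂/∂p (p F) + γ ∂²F/∂p² for all t > 0 and q, p ∈ ℝ. -/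
noncomputable def quadQ (a b c u v : ℝ) : ℝ := (c * u ^ 2 - 2 * b * u * v + a * v ^ 2) / (a * c - b ^ 2)

noncomputable def gaussG (a b c u v : ℝ) : ℝ :=
  (2 * Real.pi * Real.sqrt (a * c - b ^ 2))⁻¹ * Real.exp (-(1 / 2) * quadQ a b c u v)

lemma gaussG_hasDerivAt (a b c u v : ℝ → ℝ) (a' b' c' u' v' t : ℝ)
    (ha : HasDerivAt a a' t) (hb : HasDerivAt b b' t) (hc : HasDerivAt c c' t)
    (hu : HasDerivAt u u' t) (hv : HasDerivAt v v' t) (hD : 0 < a t * c t - b t ^ 2) :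
    HasDerivAt (fun s => gaussG (a s) (b s) (c s) (u s) (v s))
      (gaussG (a t) (b t) (c t) (u t) (v t) *
        (-(a' * c t + a t * c' - 2 * b t * b') / (2 * (a t * c t - b t ^ 2))
          - (1 / 2) * (((c' * u t ^ 2 + 2 * c t * u t * u' - 2 * b' * u t * v t
              - 2 * b t * u' * v t - 2 * b t * u t * v' + a' * v t ^ 2 + 2 * a t * v t * v')
              * (a t * c t - b t ^ 2)
              - (c t * u t ^ 2 - 2 * b t * u t * v t + a t * v t ^ 2)
                * (a' * c t + a t * c' - 2 * b t * b')) / (a t * c t - b t ^ 2) ^ 2))) t := by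
  have hDd : HasDerivAt (fun s => a s * c s - b s ^ 2) (a' * c t + a t * c' - 2 * b t * b') t := by
    refine ((ha.mul hc).sub (hb.pow 2)).congr_deriv ?_
    simp
  have hN : HasDerivAt (fun s => c s * u s ^ 2 - 2 * b s * u s * v s + a s * v s ^ 2)
      (c' * u t ^ 2 + 2 * c t * u t * u' - 2 * b' * u t * v t
              - 2 * b t * u' * v t - 2 * b t * u t * v' + a' * v t ^ 2 + 2 * a t * v t * v') t := by
    refine (((hc.mul (hu.pow 2)).sub (((hb.const_mul 2).mul hu).mul hv)).add
      (ha.mul (hv.pow 2))).congr_deriv ?_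
    simp
    ring
  have hK := ((hDd.sqrt hD.ne').const_mul (2 * Real.pi)).inv (by positivity)
  have hE := ((hN.div hDd hD.ne').const_mul (-(1 / 2))).exp
  have := hK.mul hE
  refine this.congr_deriv ?_
  simp only [gaussG, quadQ, Pi.div_apply, Pi.inv_apply]
  have hS : 0 < Real.sqrt (a t * c t - b t ^ 2) := Real.sqrt_pos.mpr hD
  have hSS : a t * c t - b t ^ 2 = Real.sqrt (a t * c t - b t ^ 2) ^ 2 := (Real.sq_sqrt hD.le).symm
  generalize Real.exp _ = X
  generalize a' * c t + a t * c' - 2 * b t * b' = D' at *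
  generalize Real.sqrt (a t * c t - b t ^ 2) = S at *
  rw [hSS]
  have := Real.pi_pos
  field_simp
  ring

lemma det_cov (γ t : ℝ) : (covMat γ t).det = covMat γ t 0 0 * covMat γ t 1 1 - covMat γ t 0 1 ^ 2 := by
  rw [Matrix.det_fin_two]
  simp [covMat]
  ring

lemma det_pos (γ t : ℝ) (hγ : 0 < γ) (ht : 0 < t) : 0 < (covMat γ t).det := by
  have key : ∀ x : ℝ, 0 < x → 0 < x * (1 + Real.exp (-x)) - 2 * (1 - Real.exp (-x)) := by
    have hd : ∀ x : ℝ, HasDerivAt (fun x : ℝ => x * (1 + Real.exp (-x)) - 2 * (1 - Real.exp (-x)))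
        (1 - Real.exp (-x) - x * Real.exp (-x)) x := by
      intro x
      have he : HasDerivAt (fun x : ℝ => Real.exp (-x)) (-Real.exp (-x)) x := by
        simpa using (hasDerivAt_neg x).exp
      refine (((hasDerivAt_id x).mul (he.const_add 1)).sub
        ((he.const_sub 1).const_mul 2)).congr_deriv ?_
      simp
      ring
    have hm : StrictMonoOn (fun x : ℝ => x * (1 + Real.exp (-x)) - 2 * (1 - Real.exp (-x)))
        (Set.Ici 0) := by
      apply strictMonoOn_of_deriv_pos (convex_Ici 0)
      · exact fun x _ => (hd x).continuousAt.continuousWithinAt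
      · intro x hx
        rw [interior_Ici, Set.mem_Ioi] at hx
        rw [(hd x).deriv]
        have h1 := Real.add_one_lt_exp hx.ne'
        have h2 : Real.exp x * Real.exp (-x) = 1 := by rw [← Real.exp_add]; simp
        nlinarith [Real.exp_pos (-x)]
    intro x hx
    have := hm (Set.mem_Ici.mpr le_rfl) (Set.mem_Ici.mpr hx.le) hx
    simpa using this
  have h := key (γ * t) (by positivity)
  have hE : Real.exp (-(γ * t)) < 1 := by
    rw [Real.exp_lt_one_iff]; nlinarith [mul_pos hγ ht]
  have e2 : Real.exp (-2 * γ * t) = Real.exp (-(γ * t)) ^ 2 := by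
    rw [← Real.exp_nat_mul]; congr 1; push_cast; ring
  have : (covMat γ t).det = 2 / γ ^ 2 * ((1 - Real.exp (-(γ * t))) *
      (γ * t * (1 + Real.exp (-(γ * t))) - 2 * (1 - Real.exp (-(γ * t))))) := by
    rw [det_cov]
    simp only [covMat, e2, neg_mul, Matrix.of_apply, Matrix.cons_val', Matrix.cons_val_zero,
      Matrix.cons_val_one, Matrix.cons_val_fin_one] at *
    rw [e2]
    field_simp
    ring
  rw [this]
  have : 0 < 1 - Real.exp (-(γ * t)) := by linarith
  positivity

lemma Fsol_eq (γ t q p q₀ p₀ : ℝ) : Fsol γ t q p q₀ p₀ =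
    gaussG (covMat γ t 0 0) (covMat γ t 0 1) (covMat γ t 1 1)
      (q - meanVec γ t q₀ p₀ 0) (p - meanVec γ t q₀ p₀ 1) := by
  have hs : covMat γ t 1 0 = covMat γ t 0 1 := by simp [covMat]
  unfold Fsol gaussG quadQ
  rw [det_cov, Matrix.inv_def, Matrix.adjugate_fin_two, det_cov, Ring.inverse_eq_inv']
  congr 3
  simp [Matrix.mulVec, dotProduct, Fin.sum_univ_two, hs]
  ring

/-- For every `t > 0` the covariance matrix `Σ(t)` is invertible, and the Gaussian
fundamental solution `F(t,q,p;q₀,p₀)` satisfies the kinetic Fokker–Planck equation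
`∂F/∂t = −p ∂F/∂q + γ ∂/∂p (p F) + γ ∂²F/∂p²` for all `t > 0` and `q, p ∈ ℝ`. -/
theorem stmt6 (γ : ℝ) (hγ : 0 < γ) (q₀ p₀ : ℝ) :
    (∀ t : ℝ, 0 < t → IsUnit (covMat γ t).det)
    ∧ (∀ t : ℝ, 0 < t → ∀ q p : ℝ,
        deriv (fun s => Fsol γ s q p q₀ p₀) t
          = -p * deriv (fun y => Fsol γ t y p q₀ p₀) q
            + γ * deriv (fun r => r * Fsol γ t q r q₀ p₀) p
            + γ * deriv (deriv (fun r => Fsol γ t q r q₀ p₀)) p) := by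
  have hDpos : ∀ t : ℝ, 0 < t → 0 < covMat γ t 0 0 * covMat γ t 1 1 - covMat γ t 0 1 ^ 2 := by
    intro t ht
    rw [← det_cov]
    exact det_pos γ t hγ ht
  refine ⟨fun t ht => (det_pos γ t hγ ht).ne'.isUnit, ?_⟩
  intro t ht q p
  have hD := hDpos t ht
  have hE : HasDerivAt (fun s => Real.exp (-γ * s)) (-γ * Real.exp (-γ * t)) t := by
    refine ((hasDerivAt_id t).const_mul (-γ)).exp.congr_deriv ?_
    simp
    ring
  have e2 : ∀ s, Real.exp (-2 * γ * s) = Real.exp (-γ * s) ^ 2 := by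
    intro s
    rw [← Real.exp_nat_mul]; congr 1; push_cast; ring
  have ha : HasDerivAt (fun s => covMat γ s 0 0) (2 * covMat γ t 0 1) t := by
    have := (((((hasDerivAt_id t).const_mul γ).sub_const (3 / 2)).add (hE.const_mul 2)).sub
      ((hE.pow 2).div_const 2)).const_mul (2 / γ ^ 2)
    have hf : (fun s => covMat γ s 0 0) = fun s => (2 / γ ^ 2) *
        (γ * s - 3 / 2 + 2 * Real.exp (-γ * s) - Real.exp (-γ * s) ^ 2 / 2) := by
      funext s
      rw [← e2]
      rfl
    rw [hf]
    refine this.congr_deriv ?_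
    simp [covMat]
    field_simp
    ring
  have hb : HasDerivAt (fun s => covMat γ s 0 1) (covMat γ t 1 1 - γ * covMat γ t 0 1) t := by
    have := ((hE.const_sub 1).pow 2).div_const γ
    refine this.congr_deriv ?_
    simp only [covMat, e2]
    simp
    field_simp
    ring
  have hc : HasDerivAt (fun s => covMat γ s 1 1) (2 * γ * (1 - covMat γ t 1 1)) t := by
    have := (hE.pow 2).const_sub 1
    have hf : (fun s => covMat γ s 1 1) = fun s => 1 - Real.exp (-γ * s) ^ 2 := by
      funext s
      rw [← e2]
      rfl
    rw [hf]
    refine this.congr_deriv ?_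
    simp only [covMat, e2]
    simp
    ring
  have hm : HasDerivAt (fun s => q - meanVec γ s q₀ p₀ 0) (-meanVec γ t q₀ p₀ 1) t := by
    have := ((((hE.const_sub 1).const_mul p₀).div_const γ).const_add q₀).const_sub q
    refine this.congr_deriv ?_
    simp [meanVec]
    field_simp
  have hn : HasDerivAt (fun s => p - meanVec γ s q₀ p₀ 1) (γ * meanVec γ t q₀ p₀ 1) t := by
    have := (hE.const_mul p₀).const_sub p
    refine this.congr_deriv ?_
    simp [meanVec]
    ring
  simp only [Fsol_eq]
  have ht' := gaussG_hasDerivAt _ _ _ _ _ _ _ _ _ _ t ha hb hc hm hn hD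
  rw [ht'.deriv]
  generalize covMat γ t 0 0 = a at *
  generalize covMat γ t 0 1 = b at *
  generalize covMat γ t 1 1 = c at *
  generalize meanVec γ t q₀ p₀ 0 = m at *
  generalize meanVec γ t q₀ p₀ 1 = n at *
  have hD' := hD.ne'
  clear ht' ha hb hc hm hn hE e2
  have hq : HasDerivAt (fun y => gaussG a b c (y - m) (p - n))
      (gaussG a b c (q - m) (p - n) * (-(c * (q - m) - b * (p - n)) / (a * c - b ^ 2))) q := by
    refine (gaussG_hasDerivAt (fun _ => a) (fun _ => b) (fun _ => c) (fun y => y - m)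
      (fun _ => p - n) 0 0 0 1 0 q (hasDerivAt_const _ _) (hasDerivAt_const _ _)
      (hasDerivAt_const _ _) ((hasDerivAt_id q).sub_const m) (hasDerivAt_const _ _) hD).congr_deriv ?_
    congr 1
    obtain ⟨D, hDe⟩ : ∃ D, D = a * c - b ^ 2 := ⟨_, rfl⟩
    simp only [← hDe] at hD' ⊢
    field_simp
    rw [hDe]
    ring
  have hp : ∀ r, HasDerivAt (fun y => gaussG a b c (q - m) (y - n))
      (gaussG a b c (q - m) (r - n) * (-(a * (r - n) - b * (q - m)) / (a * c - b ^ 2))) r := by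
    intro r
    refine (gaussG_hasDerivAt (fun _ => a) (fun _ => b) (fun _ => c) (fun _ => q - m)
      (fun y => y - n) 0 0 0 0 1 r (hasDerivAt_const _ _) (hasDerivAt_const _ _)
      (hasDerivAt_const _ _) (hasDerivAt_const _ _) ((hasDerivAt_id r).sub_const n) hD).congr_deriv ?_
    congr 1
    obtain ⟨D, hDe⟩ : ∃ D, D = a * c - b ^ 2 := ⟨_, rfl⟩
    simp only [← hDe] at hD' ⊢
    field_simp
    rw [hDe]
    ring
  have hl : HasDerivAt (fun r => -(a * (r - n) - b * (q - m)) / (a * c - b ^ 2))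
      (-a / (a * c - b ^ 2)) p := by
    have := ((((hasDerivAt_id p).sub_const n).const_mul a).sub_const (b * (q - m))).neg.div_const
      (a * c - b ^ 2)
    refine this.congr_deriv ?_
    simp
  have hpp := (hp p).mul hl
  have hrp := (hasDerivAt_id p).mul (hp p)
  have hfun : deriv (fun r => gaussG a b c (q - m) (r - n)) =
      (fun r => gaussG a b c (q - m) (r - n)) *
        (fun r => -(a * (r - n) - b * (q - m)) / (a * c - b ^ 2)) := by
    ext r
    exact (hp r).deriv
  have hrp' : deriv (fun r => r * gaussG a b c (q - m) (r - n)) p = _ := hrp.deriv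
  rw [hfun, hpp.deriv, hrp', hq.deriv]
  simp only [id]
  generalize gaussG a b c (q - m) (p - n) = G
  clear hq hp hl hpp hrp hfun hrp'
  obtain ⟨D, hDe⟩ : ∃ D, D = a * c - b ^ 2 := ⟨_, rfl⟩
  simp only [← hDe] at hD' ⊢
  field_simp
  rw [hDe]
  ring
end

section
/- Let γ > 0, t > 0, q₀ ∈ (0,1), p₀ ∈ ℝ, and define ρ(t,q,p) = Σ_{n ∈ ℤ} [ F(t,q,p; q₀ + 2n, p₀) + F(t,q,p; −q₀ + 2n, −p₀) ], where the sum is over all integers n. Then ρ satisfies the specular boundary conditions ρ(t, 0, p) = ρ(t, 0, −p) and ρ(t, 1, p) = ρ(t, 1, −p) for all p ∈ ℝ. -/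
theorem Fsol_reflect (γ t q p a b a' : ℝ) (h : q - a' = -(q - a)) :
    Fsol γ t q p a b = Fsol γ t q (-p) a' (-b) := by
  have hv : (![q, -p] - meanVec γ t a' (-b)) = -(![q, p] - meanVec γ t a b) := by
    ext i
    fin_cases i
    · simp [meanVec]
      linear_combination h
    · simp [meanVec]
      ring
  unfold Fsol
  rw [hv, Matrix.mulVec_neg, neg_dotProduct_neg]

/-- The method-of-images series
`ρ(t,q,p) = Σ_{n ∈ ℤ} [F(t,q,p; q₀+2n, p₀) + F(t,q,p; −q₀+2n, −p₀)]` satisfies the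
specular boundary conditions `ρ(t,0,p) = ρ(t,0,−p)` and `ρ(t,1,p) = ρ(t,1,−p)`. -/
theorem stmt7 (γ t q₀ p₀ : ℝ) (hγ : 0 < γ) (ht : 0 < t) (hq₀ : q₀ ∈ Set.Ioo (0 : ℝ) 1)
    (ρ : ℝ → ℝ → ℝ → ℝ)
    (hρ : ∀ s q p, ρ s q p =
      ∑' n : ℤ, (Fsol γ s q p (q₀ + 2 * n) p₀ + Fsol γ s q p (-q₀ + 2 * n) (-p₀))) :
    (∀ p : ℝ, ρ t 0 p = ρ t 0 (-p)) ∧ (∀ p : ℝ, ρ t 1 p = ρ t 1 (-p)) := by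
  constructor
  · intro p
    rw [hρ, hρ, ← (Equiv.neg ℤ).tsum_eq]
    refine tsum_congr fun n => ?_
    rw [add_comm, Fsol_reflect γ t 0 p _ (-p₀) (q₀ + 2 * n) (by simp; ring),
      Fsol_reflect γ t 0 p _ p₀ (-q₀ + 2 * n) (by simp; ring), neg_neg]
  · intro p
    rw [hρ, hρ, ← (Equiv.subLeft (1 : ℤ)).tsum_eq]
    refine tsum_congr fun n => ?_
    rw [add_comm, Fsol_reflect γ t 1 p _ (-p₀) (q₀ + 2 * n) (by simp; ring),
      Fsol_reflect γ t 1 p _ p₀ (-q₀ + 2 * n) (by simp; ring), neg_neg]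
end

section
/- Let γ > 0. For every t > 0 one has σ_pp(t) > 0 and σ_qq(t) σ_pp(t) − σ_qp(t)² > 0; in particular the covariance matrix Σ(t) is positive definite (hence invertible). -/
/-- For every `t > 0`, `σ_pp(t) > 0` and `σ_qq(t) σ_pp(t) − σ_qp(t)² > 0`; in particular
the covariance matrix `Σ(t)` is positive definite, hence invertible. -/
theorem stmt8 (γ : ℝ) (hγ : 0 < γ) :
    ∀ t : ℝ, 0 < t →
      0 < covMat γ t 1 1
      ∧ 0 < covMat γ t 0 0 * covMat γ t 1 1 - (covMat γ t 0 1) ^ 2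
      ∧ (covMat γ t).PosDef
      ∧ IsUnit (covMat γ t).det := by
  intro t ht
  have hs : 0 < γ * t := mul_pos hγ ht
  obtain ⟨e, he⟩ : ∃ e, e = Real.exp (-γ * t) := ⟨_, rfl⟩
  have he2 : Real.exp (-2 * γ * t) = e ^ 2 := by
    rw [he, ← Real.exp_nat_mul]; congr 1; push_cast; ring
  have e0 : 0 < e := he ▸ Real.exp_pos _
  have e1 : e < 1 := by
    rw [he, Real.exp_lt_one_iff]; linarith
  have key : 2 * (1 - e) < γ * t * (1 + e) := by
    have hE : 0 < e⁻¹ - 1 := by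
      have := (one_lt_inv₀ e0).2 e1
      linarith
    have h := Real.lt_log_one_add_of_pos hE
    have hl : Real.log (1 + (e⁻¹ - 1)) = γ * t := by
      rw [add_sub_cancel, Real.log_inv, he, Real.log_exp]; ring
    rw [hl, div_lt_iff₀ (by linarith)] at h
    have h2 := mul_lt_mul_of_pos_right h e0
    have h3 : e⁻¹ * e = 1 := inv_mul_cancel₀ e0.ne'
    have a1 : 2 * (e⁻¹ - 1) * e = 2 * (1 - e) := by linear_combination 2 * h3
    have a2 : γ * t * (e⁻¹ - 1 + 2) * e = γ * t * (1 + e) := by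
      linear_combination γ * t * h3
    linarith
  have h11 : 0 < covMat γ t 1 1 := by
    simp only [covMat, Matrix.of_apply, Matrix.cons_val', Matrix.cons_val_one,
      Matrix.cons_val_zero, Matrix.cons_val_fin_one]
    rw [he2]; nlinarith
  have hdet : 0 < covMat γ t 0 0 * covMat γ t 1 1 - (covMat γ t 0 1) ^ 2 := by
    simp only [covMat, Matrix.of_apply, Matrix.cons_val', Matrix.cons_val_one,
      Matrix.cons_val_zero, Matrix.cons_val_fin_one]
    rw [he2, ← he]
    have : (2 / γ ^ 2) * (γ * t - 3 / 2 + 2 * e - e ^ 2 / 2) * (1 - e ^ 2)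
        - ((1 - e) ^ 2 / γ) ^ 2
        = 2 * (1 - e) * (γ * t * (1 + e) - 2 * (1 - e)) / γ ^ 2 := by
      field_simp
      ring
    rw [this]
    have := sub_pos.2 key
    have := sub_pos.2 e1
    positivity
  have hsym : covMat γ t 1 0 = covMat γ t 0 1 := by simp [covMat]
  refine ⟨h11, hdet, ?_, ?_⟩
  · refine Matrix.PosDef.of_dotProduct_mulVec_pos ?_ ?_
    · ext i j
      fin_cases i <;> fin_cases j <;> simp [covMat]
    · intro x hx
      simp only [dotProduct, Matrix.mulVec, Fin.sum_univ_two, hsym, Pi.star_apply, star_trivial]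
      generalize covMat γ t 0 0 = a at *
      generalize covMat γ t 0 1 = b at *
      generalize covMat γ t 1 1 = c at *
      refine pos_of_mul_pos_right (a := c) ?_ h11.le
      have hid : c * (x 0 * (a * x 0 + b * x 1) + x 1 * (b * x 0 + c * x 1))
          = (a * c - b ^ 2) * x 0 ^ 2 + (b * x 0 + c * x 1) ^ 2 := by ring
      rw [hid]
      by_cases h0 : x 0 = 0
      · have h1 : x 1 ≠ 0 := by
          intro h1
          apply hx
          ext i
          fin_cases i <;> simp [h0, h1]
        rw [h0]
        have : 0 < (c * x 1) ^ 2 := by positivity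
        nlinarith
      · have : 0 < (a * c - b ^ 2) * x 0 ^ 2 := by positivity
        nlinarith [sq_nonneg (b * x 0 + c * x 1)]
  · rw [isUnit_iff_ne_zero, Matrix.det_fin_two, hsym]
    nlinarith
end

section
/- Let d ≥ 1, q, y ∈ ℝᵈ, h > 0, κ a positive integer, n₁, …, n_κ ∈ ℝᵈ unit vectors, and τ₁, …, τ_κ > 0 with ϑ_κ ≤ h, and suppose ⟨n_i, Y_{i−1}⟩ ≥ 0 for i = 1, …, κ. Then the endpoint Q = q + Σ_{i=1}^{κ} τ_i Y_{i−1} + (h − ϑ_κ) Y_κ of the multi-collision step satisfies |Q − q| ≤ h |y| + 2 Σ_{i=1}^{κ} (h − ϑ_i) ⟨n_i, Y_{i−1}⟩. -/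
open scoped RealInnerProductSpace

/-- Bound on the displacement of the multi-collision step: if `Y₀ = y`,
`Y_i = Y_{i−1} − 2⟨n_i, Y_{i−1}⟩ n_i` for unit vectors `n_i` with `⟨n_i, Y_{i−1}⟩ ≥ 0`,
collision times `τ_i > 0` with `ϑ_κ ≤ h`, then the endpoint
`Q = q + Σ τ_i Y_{i−1} + (h − ϑ_κ) Y_κ` satisfies
`|Q − q| ≤ h |y| + 2 Σ (h − ϑ_i) ⟨n_i, Y_{i−1}⟩`.
(Indices are shifted: `n i`, `τ i` for `i = 0, …, κ−1` stand for `n_{i+1}`, `τ_{i+1}`.) -/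
theorem stmt10 (d : ℕ) (hd : 1 ≤ d)
    (q y : EuclideanSpace ℝ (Fin d)) (h : ℝ) (hh : 0 < h)
    (κ : ℕ) (hκ : 1 ≤ κ)
    (n : ℕ → EuclideanSpace ℝ (Fin d)) (hn : ∀ i < κ, ‖n i‖ = 1)
    (τ : ℕ → ℝ) (hτ : ∀ i < κ, 0 < τ i)
    (ϑ : ℕ → ℝ) (hϑ : ∀ k, ϑ k = ∑ j ∈ Finset.range k, τ j)
    (hϑκ : ϑ κ ≤ h)
    (Y : ℕ → EuclideanSpace ℝ (Fin d)) (hY0 : Y 0 = y)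
    (hY : ∀ i < κ, Y (i + 1) = Y i - (2 * ⟪n i, Y i⟫) • n i)
    (hpos : ∀ i < κ, 0 ≤ ⟪n i, Y i⟫) :
    ‖(q + ∑ i ∈ Finset.range κ, τ i • Y i + (h - ϑ κ) • Y κ) - q‖
      ≤ h * ‖y‖ + 2 * ∑ i ∈ Finset.range κ, (h - ϑ (i + 1)) * ⟪n i, Y i⟫ := by
  have hnorm : ∀ i ≤ κ, ‖Y i‖ = ‖y‖ := by
    intro i
    induction i with
    | zero => intro _; rw [hY0]
    | succ k ih =>
      intro hk
      have hk' : k < κ := hk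
      rw [← ih hk'.le, hY k hk']
      have h1 : ‖Y k - (2 * ⟪n k, Y k⟫) • n k‖ ^ 2 = ‖Y k‖ ^ 2 := by
        rw [norm_sub_sq_real, inner_smul_right, norm_smul, hn k hk', real_inner_comm, mul_one,
          Real.norm_eq_abs, sq_abs]
        ring
      exact (sq_eq_sq₀ (norm_nonneg _) (norm_nonneg _)).1 h1
  have hsum : 0 ≤ ∑ i ∈ Finset.range κ, (h - ϑ (i + 1)) * ⟪n i, Y i⟫ := by
    apply Finset.sum_nonneg
    intro i hi
    have hi' := Finset.mem_range.1 hi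
    refine mul_nonneg ?_ (hpos i hi')
    have : ϑ (i + 1) ≤ ϑ κ := by
      rw [hϑ, hϑ]
      apply Finset.sum_le_sum_of_subset_of_nonneg
      · exact Finset.range_subset_range.2 hi'
      · intro j hj _
        exact (hτ j (Finset.mem_range.1 hj)).le
    linarith
  have h2 : ‖∑ i ∈ Finset.range κ, τ i • Y i‖ ≤ ϑ κ * ‖y‖ := by
    rw [hϑ, Finset.sum_mul]
    refine norm_sum_le_of_le _ ?_
    intro i hi
    have hi' := Finset.mem_range.1 hi
    rw [norm_smul, hnorm i hi'.le, Real.norm_of_nonneg (hτ i hi').le]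
  have h3 : ‖(h - ϑ κ) • Y κ‖ = (h - ϑ κ) * ‖y‖ := by
    rw [norm_smul, hnorm κ le_rfl, Real.norm_of_nonneg (by linarith)]
  rw [add_assoc, add_sub_cancel_left]
  have h4 := norm_add_le (∑ i ∈ Finset.range κ, τ i • Y i) ((h - ϑ κ) • Y κ)
  rw [h3] at h4
  linarith
end

section
/- Let d ≥ 1, x, y ∈ ℝᵈ, h > 0, κ a positive integer, n₁, …, n_κ ∈ ℝᵈ unit vectors, and τ₁, …, τ_κ > 0 with τ₁ + ⋯ + τ_κ ≤ h. Define Y₀ = y, X₀ = x, X_i = X_{i−1} + τ_i Y_{i−1}, and Y_i = Y_{i−1} − 2⟨n_i, Y_{i−1}⟩ n_i for i = 1, …, κ. Suppose there exist constants A, L > 0 and a function B : ℝᵈ → ℝᵈ such that |B(z)| ≤ A for all z ∈ ℝᵈ, B is Lipschitz with constant L, and ⟨B(X_i), n_i⟩ = 1 for i = 1, …, κ. Then Σ_{i=1}^{κ} ⟨n_i, Y_{i−1}⟩ ≤ A |y| + (L h / 2) |y|². -/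
open scoped RealInnerProductSpace

/-- Key estimate behind the bound on the number of billiard reflections in one step:
for the billiard dynamics `X_{i} = X_{i−1} + τ_i Y_{i−1}`,
`Y_i = Y_{i−1} − 2⟨n_i, Y_{i−1}⟩ n_i` with unit normals `n_i`, positive times `τ_i` with
`τ₁ + ⋯ + τ_κ ≤ h`, and a bounded Lipschitz vector field `B` with `⟨B(X_i), n_i⟩ = 1`,
one has `Σ_{i=1}^{κ} ⟨n_i, Y_{i−1}⟩ ≤ A |y| + (L h / 2) |y|²`.
(Indices are shifted: `n i`, `τ i` for `i = 0, …, κ−1` stand for `n_{i+1}`, `τ_{i+1}`,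
and the `i`-th collision point `X_i` of the paper is `X (i)` here with `X 0 = x`.) -/
theorem stmt11 (d : ℕ) (hd : 1 ≤ d)
    (x y : EuclideanSpace ℝ (Fin d)) (h : ℝ) (hh : 0 < h)
    (κ : ℕ) (hκ : 1 ≤ κ)
    (n : ℕ → EuclideanSpace ℝ (Fin d)) (hn : ∀ i < κ, ‖n i‖ = 1)
    (τ : ℕ → ℝ) (hτ : ∀ i < κ, 0 < τ i)
    (hτsum : ∑ i ∈ Finset.range κ, τ i ≤ h)
    (X Y : ℕ → EuclideanSpace ℝ (Fin d)) (hX0 : X 0 = x) (hY0 : Y 0 = y)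
    (hX : ∀ i < κ, X (i + 1) = X i + τ i • Y i)
    (hY : ∀ i < κ, Y (i + 1) = Y i - (2 * ⟪n i, Y i⟫) • n i)
    (A L : ℝ) (hA : 0 < A) (hL : 0 < L)
    (B : EuclideanSpace ℝ (Fin d) → EuclideanSpace ℝ (Fin d))
    (hBbdd : ∀ z, ‖B z‖ ≤ A)
    (hBlip : ∀ z w, ‖B z - B w‖ ≤ L * ‖z - w‖)
    (hBn : ∀ i < κ, ⟪B (X (i + 1)), n i⟫ = 1) :
    ∑ i ∈ Finset.range κ, ⟪n i, Y i⟫ ≤ A * ‖y‖ + (L * h / 2) * ‖y‖ ^ 2 := by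
  have hnorm : ∀ k ≤ κ, ‖Y k‖ = ‖y‖ := by
    intro k
    induction k with
    | zero => intro _; rw [hY0]
    | succ k ih =>
      intro hk
      have hk' : k < κ := hk
      rw [← ih hk'.le]
      have h2 : ‖Y (k + 1)‖ ^ 2 = ‖Y k‖ ^ 2 := by
        rw [hY k hk', norm_sub_sq_real, inner_smul_right, norm_smul, hn k hk',
          real_inner_comm (n k) (Y k), mul_one, Real.norm_eq_abs, sq_abs]
        ring
      exact (sq_eq_sq₀ (norm_nonneg _) (norm_nonneg _)).1 h2
  have key : ∀ k ≤ κ, 2 * ∑ i ∈ Finset.range k, ⟪n i, Y i⟫ ≤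
      ⟪B (X 0), Y 0⟫ - ⟪B (X k), Y k⟫ + L * ‖y‖ ^ 2 * ∑ i ∈ Finset.range k, τ i := by
    intro k
    induction k with
    | zero => intro _; simp
    | succ k ih =>
      intro hk
      have hk' : k < κ := hk
      have ih' := ih hk'.le
      rw [Finset.sum_range_succ, Finset.sum_range_succ]
      have e1 : ⟪B (X (k + 1)), Y (k + 1)⟫ = ⟪B (X (k + 1)), Y k⟫ - 2 * ⟪n k, Y k⟫ := by
        rw [hY k hk', inner_sub_right, inner_smul_right, hBn k hk', mul_one]
      have e2 : ⟪B (X (k + 1)) - B (X k), Y k⟫ ≤ L * ‖y‖ ^ 2 * τ k := by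
        have hl := hBlip (X (k + 1)) (X k)
        have hx : ‖X (k + 1) - X k‖ = τ k * ‖y‖ := by
          rw [hX k hk', add_sub_cancel_left, norm_smul, hnorm k hk'.le, Real.norm_eq_abs,
            abs_of_pos (hτ k hk')]
        rw [hx] at hl
        have hi := real_inner_le_norm (B (X (k + 1)) - B (X k)) (Y k)
        rw [hnorm k hk'.le] at hi
        have := mul_le_mul_of_nonneg_right hl (norm_nonneg y)
        nlinarith
      rw [inner_sub_left] at e2
      linarith
  have hfin := key κ le_rfl
  have b0 : ⟪B (X 0), Y 0⟫ ≤ A * ‖y‖ := by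
    have := real_inner_le_norm (B (X 0)) (Y 0)
    rw [hY0] at this ⊢
    exact this.trans (mul_le_mul_of_nonneg_right (hBbdd _) (norm_nonneg y))
  have b1 : -⟪B (X κ), Y κ⟫ ≤ A * ‖y‖ := by
    have := (neg_le_abs _).trans (abs_real_inner_le_norm (B (X κ)) (Y κ))
    rw [hnorm κ le_rfl] at this
    exact this.trans (mul_le_mul_of_nonneg_right (hBbdd _) (norm_nonneg y))
  have b2 : L * ‖y‖ ^ 2 * ∑ i ∈ Finset.range κ, τ i ≤ L * ‖y‖ ^ 2 * h :=
    mul_le_mul_of_nonneg_left hτsum (by positivity)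
  linarith
end

section
/- Let M ≥ 1 and let U : ℝ → ℝ be three times continuously differentiable with |U'(x)| ≤ M, |U''(x)| ≤ M, and |U'''(x)| ≤ M for all x ∈ ℝ. There exists a constant C > 0, depending only on M, with the following property. For all h ∈ (0,1], p ∈ ℝ with |p| ≤ M, q > 0, τ ∈ (0,h), and functions x₁ : [0,τ] → ℝ and x₂ : [τ,h] → ℝ, each twice continuously differentiable with x₁'' = −U' ∘ x₁ and x₂'' = −U' ∘ x₂, satisfying x₁(0) = q, x₁'(0) = p, x₁(τ) = 0, x₂(τ) = 0, and x₂'(τ) = −x₁'(τ), the following bounds hold: |x₂(h) − (q + (2τ−h) p − (1/2)(h−2τ)² U'(q))| ≤ C h³ and |x₂'(h) − (−p + (2τ−h) U'(q) + (1/2)(h−2τ)² U''(q) p)| ≤ C h³. -/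
theorem cmp_aux (f f' : ℝ → ℝ) (a b C : ℝ) (n : ℕ) (hC : 0 ≤ C)
    (hf : ∀ s ∈ Set.Icc a b, HasDerivAt f (f' s) s)
    (hb : ∀ s ∈ Set.Icc a b, |f' s| ≤ C * (s - a) ^ n) :
    ∀ s ∈ Set.Icc a b, |f s - f a| ≤ C * (s - a) ^ (n + 1) := by
  intro s hs
  have := norm_image_sub_le_of_norm_deriv_le_segment' (f := f) (f' := f') (a := a) (b := s)
    (C := C * (s - a) ^ n)
    (fun x hx => (hf x ⟨hx.1, hx.2.trans hs.2⟩).hasDerivWithinAt)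
    (fun x hx => by
      refine (hb x ⟨hx.1, hx.2.le.trans hs.2⟩).trans ?_
      have h1 : 0 ≤ x - a := sub_nonneg.2 hx.1
      have h2 : x - a ≤ s - a := by linarith [hx.2]
      gcongr) s ⟨hs.1, le_refl s⟩
  rw [Real.norm_eq_abs] at this
  rw [pow_succ, ← mul_assoc]
  exact this

theorem lip_aux (f : ℝ → ℝ) (M : ℝ) (hf : Differentiable ℝ f) (hb : ∀ x, |deriv f x| ≤ M)
    (y z : ℝ) : |f y - f z| ≤ M * |y - z| :=
  Convex.norm_image_sub_le_of_norm_deriv_le (s := Set.univ) (fun x _ => hf x)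
    (fun x _ => hb x) convex_univ (Set.mem_univ z) (Set.mem_univ y)

theorem quad_aux (f : ℝ → ℝ) (M : ℝ) (hf : Differentiable ℝ f)
    (hf2 : Differentiable ℝ (deriv f)) (hM : 0 ≤ M)
    (hb : ∀ x, |deriv (deriv f) x| ≤ M) (y z : ℝ) :
    |f y - f z - deriv f z * (y - z)| ≤ M * |y - z| ^ 2 := by
  have hd : ∀ x, HasDerivAt (fun x => f x - deriv f z * x) (deriv f x - deriv f z) x := by
    intro x
    exact ((hf x).hasDerivAt.sub ((hasDerivAt_id x).const_mul (deriv f z))).congr_deriv (by ring)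
  have := Convex.norm_image_sub_le_of_norm_hasDerivWithin_le (s := Set.uIcc z y)
    (C := M * |y - z|) (fun x _ => (hd x).hasDerivWithinAt)
    (fun x hx => by
      refine (lip_aux (deriv f) M hf2 hb x z).trans ?_
      have := Set.abs_sub_left_of_mem_uIcc hx
      gcongr) (convex_uIcc z y) Set.left_mem_uIcc Set.right_mem_uIcc
  simp only [Real.norm_eq_abs] at this
  calc _ = |f y - deriv f z * y - (f z - deriv f z * z)| := by congr 1; ring
    _ ≤ _ := this
    _ = _ := by ring

theorem ode_aux (M : ℝ) (hM : 1 ≤ M) (U : ℝ → ℝ) (hU : ContDiff ℝ 3 U)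
    (h1 : ∀ x, |deriv U x| ≤ M) (h2 : ∀ x, |deriv (deriv U) x| ≤ M)
    (h3 : ∀ x, |deriv (deriv (deriv U)) x| ≤ M) (a b : ℝ) (hab : a ≤ b) (hb1 : b - a ≤ 1)
    (x v : ℝ → ℝ) (hx : ∀ s ∈ Set.Icc a b, HasDerivAt x (v s) s)
    (hv : ∀ s ∈ Set.Icc a b, HasDerivAt v (-deriv U (x s)) s) (hva : |v a| ≤ 2 * M) :
    |v b - v a| ≤ M * (b - a) ∧ |x b - x a - (b - a) * v a| ≤ M * (b - a) ^ 2 ∧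
    |x b - x a - (b - a) * v a + (b - a) ^ 2 / 2 * deriv U (x a)| ≤ 10 * M ^ 3 * (b - a) ^ 3 ∧
    |v b - v a + (b - a) * deriv U (x a) + (b - a) ^ 2 / 2 * (deriv (deriv U) (x a) * v a)|
      ≤ 10 * M ^ 3 * (b - a) ^ 3 := by
  have hM0 : 0 ≤ M := by linarith
  have hU2 : ContDiff ℝ 2 (deriv U) := hU.deriv' (n := 2)
  have hU3 : ContDiff ℝ 1 (deriv (deriv U)) := hU2.deriv' (n := 1)
  have hd1 : Differentiable ℝ (deriv U) := hU2.differentiable (by norm_num)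
  have hd2 : Differentiable ℝ (deriv (deriv U)) := hU3.differentiable (by norm_num)
  have id_sub : ∀ s, HasDerivAt (fun s : ℝ => s - a) 1 s := fun s => (hasDerivAt_id s).sub_const a
  have sq_sub : ∀ s, HasDerivAt (fun s : ℝ => (s - a) ^ 2 / 2) (s - a) s := fun s => by
    exact (((id_sub s).pow 2).div_const 2).congr_deriv (by norm_num)
  have hbm : b ∈ Set.Icc a b := ⟨hab, le_refl b⟩
  have e1 : ∀ s ∈ Set.Icc a b, |v s - v a| ≤ M * (s - a) ^ (0 + 1) :=
    cmp_aux v _ a b M 0 hM0 hv (fun s hs => by simpa using h1 (x s))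
  have e2 : ∀ s ∈ Set.Icc a b, |x s - x a - (s - a) * v a| ≤ M * (s - a) ^ 2 := by
    intro s hs
    have := cmp_aux (fun s => x s - (s - a) * v a) (fun s => v s - v a) a b M 1 hM0
      (fun s hs => ((hx s hs).sub ((id_sub s).mul_const (v a))).congr_deriv (by ring)) e1 s hs
    calc _ = |x s - (s - a) * v a - (x a - (a - a) * v a)| := by congr 1; ring
      _ ≤ _ := this
  have e3 : ∀ s ∈ Set.Icc a b, |x s - x a| ≤ 3 * M * (s - a) ^ (0 + 1) :=
    cmp_aux x _ a b (3 * M) 0 (by positivity) hx (fun s hs => by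
      have := e1 s hs
      have h5 : M * (s - a) ≤ M * 1 := by
        have : s - a ≤ 1 := by linarith [hs.2]
        gcongr
      have h6 : |v s| ≤ |v s - v a| + |v a| := by simpa using abs_add_le (v s - v a) (v a)
      simp at this ⊢
      linarith)
  have e4 : ∀ s ∈ Set.Icc a b, |-deriv U (x s) + deriv U (x a)| ≤ 3 * M ^ 2 * (s - a) ^ 1 := by
    intro s hs
    have h5 := lip_aux (deriv U) M hd1 h2 (x s) (x a)
    have h6 := mul_le_mul_of_nonneg_left (e3 s hs) hM0
    have h7 : |-deriv U (x s) + deriv U (x a)| = |deriv U (x s) - deriv U (x a)| := by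
      rw [← abs_neg]; congr 1; ring
    rw [h7]
    rw [zero_add, pow_one] at h6
    rw [pow_one]
    linarith
  have e5 : ∀ s ∈ Set.Icc a b, |v s - v a + (s - a) * deriv U (x a)| ≤ 3 * M ^ 2 * (s - a) ^ 2 := by
    intro s hs
    have := cmp_aux (fun s => v s + (s - a) * deriv U (x a)) _ a b (3 * M ^ 2) 1 (by positivity)
      (fun s hs => ((hv s hs).add ((id_sub s).mul_const (deriv U (x a)))).congr_deriv (by rw [one_mul])) e4 s hs
    calc _ = |v s + (s - a) * deriv U (x a) - (v a + (a - a) * deriv U (x a))| := by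
            congr 1; ring
      _ ≤ _ := this
  have e6 : ∀ s ∈ Set.Icc a b, |x s - x a - (s - a) * v a + (s - a) ^ 2 / 2 * deriv U (x a)|
      ≤ 3 * M ^ 2 * (s - a) ^ 3 := by
    intro s hs
    have := cmp_aux (fun s => x s - (s - a) * v a + (s - a) ^ 2 / 2 * deriv U (x a)) _ a b
      (3 * M ^ 2) 2 (by positivity)
      (fun s hs => (((hx s hs).sub ((id_sub s).mul_const (v a))).add
          ((sq_sub s).mul_const (deriv U (x a)))).congr_deriv (by rw [one_mul])) e5 s hs
    calc _ = |x s - (s - a) * v a + (s - a) ^ 2 / 2 * deriv U (x a)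
          - (x a - (a - a) * v a + (a - a) ^ 2 / 2 * deriv U (x a))| := by
            congr 1; ring
      _ ≤ _ := this
  have hMM : M ^ 2 ≤ M ^ 3 := pow_le_pow_right₀ hM (by norm_num)
  have e7 : ∀ s ∈ Set.Icc a b, |-deriv U (x s) + deriv U (x a)
      + (s - a) * (deriv (deriv U) (x a) * v a)| ≤ 10 * M ^ 3 * (s - a) ^ 2 := by
    intro s hs
    have h5 := quad_aux (deriv U) M hd1 hd2 hM0 h3 (x s) (x a)
    have h6 : |x s - x a| ^ 2 ≤ (3 * M * (s - a) ^ (0 + 1)) ^ 2 := by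
      have := e3 s hs
      gcongr
    have h7 := mul_le_mul_of_nonneg_left h6 hM0
    have h8 : |deriv (deriv U) (x a) * (x s - x a - (s - a) * v a)| ≤ M * (M * (s - a) ^ 2) := by
      rw [abs_mul]
      exact mul_le_mul (h2 _) (e2 s hs) (abs_nonneg _) hM0
    have h9 : M ^ 2 * (s - a) ^ 2 ≤ M ^ 3 * (s - a) ^ 2 := by gcongr
    rw [zero_add, pow_one] at h7
    rw [abs_le] at h5 h8 ⊢
    constructor <;> linarith [h5.1, h5.2, h8.1, h8.2]
  have e8 : ∀ s ∈ Set.Icc a b, |v s - v a + (s - a) * deriv U (x a)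
      + (s - a) ^ 2 / 2 * (deriv (deriv U) (x a) * v a)| ≤ 10 * M ^ 3 * (s - a) ^ 3 := by
    intro s hs
    have := cmp_aux (fun s => v s + (s - a) * deriv U (x a)
        + (s - a) ^ 2 / 2 * (deriv (deriv U) (x a) * v a)) _ a b
      (10 * M ^ 3) 2 (by positivity)
      (fun s hs => (((hv s hs).add ((id_sub s).mul_const (deriv U (x a)))).add
          ((sq_sub s).mul_const (deriv (deriv U) (x a) * v a))).congr_deriv (by rw [one_mul])) e7 s hs
    calc _ = |v s + (s - a) * deriv U (x a) + (s - a) ^ 2 / 2 * (deriv (deriv U) (x a) * v a)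
          - (v a + (a - a) * deriv U (x a)
            + (a - a) ^ 2 / 2 * (deriv (deriv U) (x a) * v a))| := by
            congr 1; ring
      _ ≤ _ := this
  refine ⟨by simpa using e1 b hbm, e2 b hbm, (e6 b hbm).trans ?_, e8 b hbm⟩
  have : 0 ≤ b - a := by linarith
  gcongr
  nlinarith

/-- Taylor expansion of the exact solution of deterministic Hamiltonian dynamics on the
half-line with one elastic collision at the boundary `{0}` at time `τ ∈ (0,h)`: the
trajectory solves `x'' = −U'(x)` before (`x₁`, with velocity `v₁`) and after (`x₂`, with
velocity `v₂`) the collision, the velocity being reversed at time `τ`.  The constant `C`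
depends only on the bound `M` on `U'`, `U''`, `U'''` and on the initial speed. -/
theorem stmt15 (M : ℝ) (hM : 1 ≤ M) :
    ∃ C > (0 : ℝ), ∀ U : ℝ → ℝ, ContDiff ℝ 3 U →
      (∀ x, |deriv U x| ≤ M) →
      (∀ x, |deriv (deriv U) x| ≤ M) →
      (∀ x, |deriv (deriv (deriv U)) x| ≤ M) →
      ∀ h ∈ Set.Ioc (0 : ℝ) 1, ∀ p : ℝ, |p| ≤ M → ∀ q : ℝ, 0 < q →
      ∀ τ ∈ Set.Ioo (0 : ℝ) h, ∀ x₁ v₁ x₂ v₂ : ℝ → ℝ,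
        (∀ s ∈ Set.Icc (0 : ℝ) τ, HasDerivAt x₁ (v₁ s) s) →
        (∀ s ∈ Set.Icc (0 : ℝ) τ, HasDerivAt v₁ (-deriv U (x₁ s)) s) →
        (∀ s ∈ Set.Icc τ h, HasDerivAt x₂ (v₂ s) s) →
        (∀ s ∈ Set.Icc τ h, HasDerivAt v₂ (-deriv U (x₂ s)) s) →
        x₁ 0 = q → v₁ 0 = p → x₁ τ = 0 → x₂ τ = 0 → v₂ τ = -v₁ τ →
        |x₂ h - (q + (2 * τ - h) * p - (1 / 2) * (h - 2 * τ) ^ 2 * deriv U q)|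
            ≤ C * h ^ 3
        ∧ |v₂ h - (-p + (2 * τ - h) * deriv U q
              + (1 / 2) * (h - 2 * τ) ^ 2 * deriv (deriv U) q * p)|
            ≤ C * h ^ 3 := by
  have hM0 : 0 ≤ M := by linarith
  refine ⟨40 * M ^ 3, by positivity, ?_⟩
  intro U hU h1 h2 h3 h hh p hp q hq τ hτ x₁ v₁ x₂ v₂ hx1 hv1 hx2 hv2 hq0 hp0 hx1τ hx2τ hvτ
  obtain ⟨hh0, hh1⟩ := hh
  obtain ⟨hτ0, hτh⟩ := hτ
  have hU2 : ContDiff ℝ 2 (deriv U) := hU.deriv' (n := 2)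
  have hU3 : ContDiff ℝ 1 (deriv (deriv U)) := hU2.deriv' (n := 1)
  have hd1 : Differentiable ℝ (deriv U) := hU2.differentiable (by norm_num)
  have hd2 : Differentiable ℝ (deriv (deriv U)) := hU3.differentiable (by norm_num)
  obtain ⟨a1, a2, a3, a4⟩ := ode_aux M hM U hU h1 h2 h3 0 τ hτ0.le (by linarith) x₁ v₁ hx1 hv1
    (by rw [hp0]; linarith)
  rw [hp0] at a1 a2 a3 a4
  rw [hq0] at a2 a3 a4
  rw [hx1τ] at a2 a3
  simp only [sub_zero] at a1 a2 a3 a4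
  have hw : |v₁ τ| ≤ 2 * M := by
    have h6 : |v₁ τ| ≤ |v₁ τ - p| + |p| := by simpa using abs_add_le (v₁ τ - p) p
    nlinarith
  obtain ⟨-, -, b3, b4⟩ := ode_aux M hM U hU h1 h2 h3 τ h hτh.le (by linarith) x₂ v₂ hx2 hv2
    (by rw [hvτ, abs_neg]; exact hw)
  rw [hvτ, hx2τ] at b3 b4
  have c1 := lip_aux (deriv U) M hd1 h2 0 q
  have c2 := lip_aux (deriv (deriv U)) M hd2 h3 0 q
  have c3 := quad_aux (deriv U) M hd1 hd2 hM0 h3 0 q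
  have hB := h2 q
  have hqa : |0 - q| = q := by rw [zero_sub, abs_neg, abs_of_pos hq]
  rw [hqa] at c1 c2 c3
  generalize deriv (deriv U) q = B at *
  generalize deriv (deriv U) 0 = B0 at *
  generalize deriv U q = A at *
  generalize deriv U 0 = A0 at *
  generalize v₁ τ = w at *
  obtain ⟨s, rfl⟩ : ∃ s, h = τ + s := ⟨h - τ, by ring⟩
  rw [add_sub_cancel_left] at b3 b4
  generalize x₂ (τ + s) = X at *
  generalize v₂ (τ + s) = V at *
  have hs0 : 0 ≤ s := by linarith
  have hqb : q ≤ 2 * M * (τ + s) := by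
    have h6 : -(τ * p) ≤ τ * M := by nlinarith [abs_le.1 hp]
    have : M * τ ^ 2 ≤ M * τ := by nlinarith [mul_nonneg hM0 hτ0.le]
    nlinarith [(abs_le.1 a2).1, mul_nonneg hM0 hs0]
  set H := τ + s with hH
  have hτH : τ ≤ H := hτh.le
  have hsH : s ≤ H := by linarith
  have hMM : M ^ 2 * H ^ 3 ≤ M ^ 3 * H ^ 3 := by
    have := pow_le_pow_right₀ hM (show 2 ≤ 3 by norm_num)
    gcongr
  have r1 : |0 - q - τ * p + τ ^ 2 / 2 * A| ≤ 10 * M ^ 3 * H ^ 3 := a3.trans (by gcongr)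
  have r2 : |w - p + τ * A + τ ^ 2 / 2 * (B * p)| ≤ 10 * M ^ 3 * H ^ 3 := a4.trans (by gcongr)
  have r3 : |X - 0 - s * -w + s ^ 2 / 2 * A0| ≤ 10 * M ^ 3 * H ^ 3 := b3.trans (by gcongr)
  have r4 : |V - -w + s * A0 + s ^ 2 / 2 * (B0 * -w)| ≤ 10 * M ^ 3 * H ^ 3 :=
    b4.trans (by gcongr)
  have habs : |s| ≤ H := by rwa [abs_of_nonneg hs0]
  have habt : |τ| ≤ H := by rwa [abs_of_pos hτ0]
  have hs1 : |s| ≤ 1 := habs.trans hh1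
  have t1 : |s * (w - p + τ * A + τ ^ 2 / 2 * (B * p))| ≤ 10 * M ^ 3 * H ^ 3 := by
    rw [abs_mul]
    calc _ ≤ 1 * (10 * M ^ 3 * H ^ 3) := by gcongr
      _ = _ := by ring
  have t2 : |s * τ ^ 2 * B * p| ≤ M ^ 2 * H ^ 3 := by
    rw [abs_mul, abs_mul, abs_mul, abs_pow]
    calc _ ≤ H * H ^ 2 * M * M := by gcongr
      _ = _ := by ring
  have t3 : |s ^ 2 * (A0 - A)| ≤ 2 * M ^ 2 * H ^ 3 := by
    rw [abs_mul, abs_pow]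
    calc _ ≤ H ^ 2 * (M * (2 * M * H)) := by
          have := c1.trans (mul_le_mul_of_nonneg_left hqb hM0)
          gcongr
      _ = _ := by ring
  have t4 : |s * (A0 - A - B * (0 - q))| ≤ 4 * M ^ 3 * H ^ 3 := by
    rw [abs_mul]
    calc _ ≤ H * (M * (2 * M * H) ^ 2) := by
          have : M * q ^ 2 ≤ M * (2 * M * H) ^ 2 := by gcongr
          have := c3.trans this
          gcongr
      _ = _ := by ring
  have t5 : |s * B * (0 - q - τ * p)| ≤ M ^ 2 * H ^ 3 := by
    rw [abs_mul, abs_mul]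
    calc _ ≤ H * M * (M * H ^ 2) := by
          have : M * τ ^ 2 ≤ M * H ^ 2 := by gcongr
          have := a2.trans this
          gcongr
      _ = _ := by ring
  have t6 : |s ^ 2 * (B0 - B) * w| ≤ 4 * M ^ 3 * H ^ 3 := by
    rw [abs_mul, abs_mul, abs_pow]
    calc _ ≤ H ^ 2 * (M * (2 * M * H)) * (2 * M) := by
          have := c2.trans (mul_le_mul_of_nonneg_left hqb hM0)
          gcongr
      _ = _ := by ring
  have t7 : |s ^ 2 * B * (w - p)| ≤ M ^ 2 * H ^ 3 := by
    rw [abs_mul, abs_mul, abs_pow]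
    calc _ ≤ H ^ 2 * M * (M * H) := by
          have : M * τ ≤ M * H := by gcongr
          have := a1.trans this
          gcongr
      _ = _ := by ring
  clear_value H
  have hnn : 0 ≤ M ^ 3 * H ^ 3 := by positivity
  rw [abs_le] at r1 r2 r3 r4 t1 t2 t3 t4 t5 t6 t7
  have hX : X - (q + (2 * τ - H) * p - (1 / 2) * (H - 2 * τ) ^ 2 * A)
      = (X - 0 - s * -w + s ^ 2 / 2 * A0) - s * (w - p + τ * A + τ ^ 2 / 2 * (B * p))
        + (s * τ ^ 2 * B * p) / 2 - (s ^ 2 * (A0 - A)) / 2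
        + (0 - q - τ * p + τ ^ 2 / 2 * A) := by
    rw [hH]; ring
  have hV : V - (-p + (2 * τ - H) * A + (1 / 2) * (H - 2 * τ) ^ 2 * B * p)
      = (V - -w + s * A0 + s ^ 2 / 2 * (B0 * -w)) - (w - p + τ * A + τ ^ 2 / 2 * (B * p))
        - s * (A0 - A - B * (0 - q)) - s * B * (0 - q - τ * p)
        + (s ^ 2 * (B0 - B) * w) / 2 + (s ^ 2 * B * (w - p)) / 2 := by
    rw [hH]; ring
  rw [hX, hV, abs_le, abs_le]
  obtain ⟨r1a, r1b⟩ := r1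
  obtain ⟨r2a, r2b⟩ := r2
  obtain ⟨r3a, r3b⟩ := r3
  obtain ⟨r4a, r4b⟩ := r4
  obtain ⟨t1a, t1b⟩ := t1
  obtain ⟨t2a, t2b⟩ := t2
  obtain ⟨t3a, t3b⟩ := t3
  obtain ⟨t4a, t4b⟩ := t4
  obtain ⟨t5a, t5b⟩ := t5
  obtain ⟨t6a, t6b⟩ := t6
  obtain ⟨t7a, t7b⟩ := t7
  refine ⟨⟨?_, ?_⟩, ⟨?_, ?_⟩⟩ <;> linarith
end

section
/- Let a > 0 and let ρ : [0,a] → ℝ be continuously differentiable with ρ(t) > 0 for all t ∈ [0,a]. Then there exist constants C > 0 and h₀ ∈ (0,a] such that for all h ∈ (0,h₀], | (∫₀^h t ρ(t) dt) / (∫₀^h ρ(t) dt) − h/2 | ≤ C h². -/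
theorem stmt16 (a : ℝ) (ha : 0 < a) (ρ : ℝ → ℝ)
    (hρ : ContDiffOn ℝ 1 ρ (Set.Icc 0 a))
    (hpos : ∀ t ∈ Set.Icc (0 : ℝ) a, 0 < ρ t) :
    ∃ C > (0 : ℝ), ∃ h₀ ∈ Set.Ioc (0 : ℝ) a, ∀ h ∈ Set.Ioc (0 : ℝ) h₀,
      |(∫ t in (0 : ℝ)..h, t * ρ t) / (∫ t in (0 : ℝ)..h, ρ t) - h / 2| ≤ C * h ^ 2 := by
  have hc := hρ.continuousOn
  have hne : (Set.Icc 0 a).Nonempty := ⟨0, le_refl _, ha.le⟩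
  obtain ⟨t₀, ht₀, hmin⟩ := isCompact_Icc.exists_isMinOn hne hc
  have hm := hpos t₀ ht₀
  set m := ρ t₀ with hmdef
  have hd : ContinuousOn (derivWithin ρ (Set.Icc 0 a)) (Set.Icc 0 a) :=
    hρ.continuousOn_derivWithin (uniqueDiffOn_Icc ha) le_rfl
  obtain ⟨K, hK⟩ := isCompact_Icc.exists_bound_of_continuousOn hd
  have hK0 : 0 ≤ K := (norm_nonneg _).trans (hK 0 ⟨le_refl _, ha.le⟩)
  have hlip : ∀ t ∈ Set.Icc (0 : ℝ) a, |ρ t - ρ 0| ≤ K * t := by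
    intro t ht
    have := (convex_Icc (0 : ℝ) a).norm_image_sub_le_of_norm_derivWithin_le
      (hρ.differentiableOn one_ne_zero) hK ⟨le_refl _, ha.le⟩ ht
    simpa [abs_of_nonneg ht.1] using this
  refine ⟨K / (2 * m) + 1, by positivity, a, ⟨ha, le_refl _⟩, ?_⟩
  rintro h ⟨h0, hha⟩
  have hsub : Set.uIcc 0 h ⊆ Set.Icc 0 a := by
    rw [Set.uIcc_of_le h0.le]; exact Set.Icc_subset_Icc_right hha
  have hc' := hc.mono hsub
  have hi : IntervalIntegrable ρ MeasureTheory.volume 0 h := hc'.intervalIntegrable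
  have hi2 : IntervalIntegrable (fun t => t * ρ t) MeasureTheory.volume 0 h :=
    (continuousOn_id.mul hc').intervalIntegrable
  have hden : m * h ≤ ∫ t in (0 : ℝ)..h, ρ t := by
    have := intervalIntegral.integral_mono_on h0.le
      (intervalIntegrable_const (c := m)) hi
      (fun t ht => hmin (hsub (by rwa [Set.uIcc_of_le h0.le])))
    simpa [mul_comm] using this
  have hlin : ∫ t in (0 : ℝ)..h, (t - h / 2) * ρ 0 = 0 := by
    rw [intervalIntegral.integral_mul_const, intervalIntegral.integral_sub
      (f := fun t : ℝ => t) (continuous_id.intervalIntegrable _ _) intervalIntegrable_const]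
    simp
    left; ring
  have hnum : (∫ t in (0 : ℝ)..h, t * ρ t) - h / 2 * (∫ t in (0 : ℝ)..h, ρ t)
      = ∫ t in (0 : ℝ)..h, (t - h / 2) * (ρ t - ρ 0) := by
    have hi3 : IntervalIntegrable (fun t => (t - h / 2) * ρ 0) MeasureTheory.volume 0 h :=
      Continuous.intervalIntegrable (by fun_prop) _ _
    have e1 := intervalIntegral.integral_sub hi2 (hi.const_mul (h / 2))
    have e2 := intervalIntegral.integral_sub (hi2.sub (hi.const_mul (h / 2))) hi3
    rw [intervalIntegral.integral_const_mul] at e1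
    rw [hlin, sub_zero] at e2
    rw [← e1]
    refine e2.symm.trans ?_
    apply intervalIntegral.integral_congr
    intro t _
    simp only [Pi.sub_apply]
    ring
  have hb : ‖∫ t in (0 : ℝ)..h, (t - h / 2) * (ρ t - ρ 0)‖ ≤ (h / 2 * (K * h)) * |h - 0| := by
    apply intervalIntegral.norm_integral_le_of_norm_le_const
    intro t ht
    rw [Set.uIoc_of_le h0.le] at ht
    rw [norm_mul]
    have h1 : |t - h / 2| ≤ h / 2 := by rw [abs_le]; constructor <;> linarith [ht.1, ht.2]
    have h2 := hlip t ⟨ht.1.le, ht.2.trans hha⟩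
    have h3 : K * t ≤ K * h := mul_le_mul_of_nonneg_left ht.2 hK0
    exact mul_le_mul h1 (h2.trans h3) (abs_nonneg _) (by positivity)
  rw [sub_zero, abs_of_pos h0, ← hnum, Real.norm_eq_abs] at hb
  have hmh : 0 < m * h := by positivity
  set D := ∫ t in (0 : ℝ)..h, ρ t
  set N := ∫ t in (0 : ℝ)..h, t * ρ t
  have hD : 0 < D := hmh.trans_le hden
  have e : N / D - h / 2 = (N - h / 2 * D) / D := by field_simp
  rw [e, abs_div, abs_of_pos hD, div_le_iff₀ hD]
  calc _ ≤ _ := hb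
    _ = (K / (2 * m)) * h ^ 2 * (m * h) := by field_simp
    _ ≤ (K / (2 * m) + 1) * h ^ 2 * D := by gcongr; linarith
end

section
/- Let γ, β, h > 0, q, p ∈ ℝ, and let U : ℝ → ℝ be continuously differentiable. Set Γ = √((2γ/β)(1 − e^{−γh})) and define T : ℝ² → ℝ², T(z₁,z₂) = (Q(z₁), P(z₁,z₂)), by 𝒫₂(z₁) = e^{−γh/2} p + Γ z₁ − (h/2) U'(q), 𝒬(z₁) = q + h 𝒫₂(z₁), Q(z₁) = |𝒬(z₁)|, 𝒫₄(z₁) = sign(𝒬(z₁)) 𝒫₂(z₁) − (h/2) U'(Q(z₁)), and P(z₁,z₂) = e^{−γh/2} 𝒫₄(z₁) + Γ z₂. If (ξ₁, ξ₂) is a pair of independent standard Gaussian random variables, then the law of T(ξ₁, ξ₂) is absolutely continuous with respect to Lebesgue measure on ℝ². -/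
open MeasureTheory

theorem aux_affine (a b : ℝ) (hb : b ≠ 0) (N : Set ℝ) (hN : volume N = 0) :
    volume {x : ℝ | a + b * x ∈ N} = 0 := by
  have h1 : {x : ℝ | a + b * x ∈ N} = (fun x => b * x) ⁻¹' ((fun x => a + x) ⁻¹' N) := rfl
  rw [h1, Real.volume_preimage_mul_left hb, measure_preimage_add, hN, mul_zero]

theorem aux_abs (N : Set ℝ) (hN : volume N = 0) :
    volume {x : ℝ | |x| ∈ N} = 0 := by
  have h2 : volume {x : ℝ | 0 + (-1) * x ∈ N} = 0 := aux_affine 0 (-1) (by norm_num) N hN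
  refine measure_mono_null (t := N ∪ {x : ℝ | 0 + (-1) * x ∈ N}) ?_ (measure_union_null hN h2)
  intro x hx
  rcases abs_choice x with h | h
  · left
    simpa [h] using hx
  · right
    simpa [h] using hx

theorem aux_sign : Measurable Real.sign := by
  unfold Real.sign
  exact Measurable.ite measurableSet_Iio measurable_const
    (Measurable.ite measurableSet_Ioi measurable_const measurable_const)

/-- The law of one step `T(ξ₁,ξ₂)` of the splitting scheme `[OBA_cBO]` for
one-dimensional confined Langevin dynamics on the half-line, driven by two independent
standard Gaussian random variables, is absolutely continuous with respect to Lebesgue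
measure on `ℝ²`. -/
theorem stmt18 (γ β h q p : ℝ) (hγ : 0 < γ) (hβ : 0 < β) (hh : 0 < h)
    (U : ℝ → ℝ) (hU : ContDiff ℝ 1 U)
    (Γ : ℝ) (hΓ : Γ = Real.sqrt ((2 * γ / β) * (1 - Real.exp (-γ * h))))
    (P₂ Qc Qp P₄ : ℝ → ℝ) (T : ℝ × ℝ → ℝ × ℝ)
    (hP₂ : ∀ z₁, P₂ z₁ = Real.exp (-γ * h / 2) * p + Γ * z₁ - (h / 2) * deriv U q)
    (hQc : ∀ z₁, Qc z₁ = q + h * P₂ z₁)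
    (hQp : ∀ z₁, Qp z₁ = |Qc z₁|)
    (hP₄ : ∀ z₁, P₄ z₁ = Real.sign (Qc z₁) * P₂ z₁ - (h / 2) * deriv U (Qp z₁))
    (hT : ∀ z : ℝ × ℝ, T z = (Qp z.1, Real.exp (-γ * h / 2) * P₄ z.1 + Γ * z.2))
    {Ω : Type*} [MeasurableSpace Ω] (μ : Measure Ω) [IsProbabilityMeasure μ]
    (ξ₁ ξ₂ : Ω → ℝ) (hmeas₁ : Measurable ξ₁) (hmeas₂ : Measurable ξ₂)
    (hgauss₁ : Measure.map ξ₁ μ = ProbabilityTheory.gaussianReal 0 1)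
    (hgauss₂ : Measure.map ξ₂ μ = ProbabilityTheory.gaussianReal 0 1)
    (hindep : ProbabilityTheory.IndepFun ξ₁ ξ₂ μ) :
    Measure.map (fun ω => T (ξ₁ ω, ξ₂ ω)) μ ≪ (volume : Measure (ℝ × ℝ)) := by
  have hexp : Real.exp (-γ * h) < 1 := by
    rw [Real.exp_lt_one_iff]
    nlinarith [mul_pos hγ hh]
  have hΓ0 : Γ ≠ 0 := by
    rw [hΓ]
    have : 0 < 1 - Real.exp (-γ * h) := by linarith
    positivity
  have mP₂ : Measurable P₂ := by
    rw [funext hP₂]; fun_prop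
  have mQc : Measurable Qc := by
    rw [funext hQc]; fun_prop
  have mQp : Measurable Qp := by
    rw [funext hQp]; exact mQc.abs
  have mU : Measurable (deriv U) := measurable_deriv U
  have mP₄ : Measurable P₄ := by
    rw [funext hP₄]
    exact ((aux_sign.comp mQc).mul mP₂).sub ((mU.comp mQp).const_mul _)
  have mT : Measurable T := by
    rw [funext hT]
    exact (mQp.comp measurable_fst).prodMk
      (((mP₄.comp measurable_fst).const_mul _).add (measurable_snd.const_mul _))
  have hac : ProbabilityTheory.gaussianReal 0 1 ≪ volume :=
    ProbabilityTheory.gaussianReal_absolutelyContinuous 0 one_ne_zero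
  have hlaw : Measure.map (fun ω => (ξ₁ ω, ξ₂ ω)) μ ≪ (volume : Measure (ℝ × ℝ)) := by
    rw [(ProbabilityTheory.indepFun_iff_map_prod_eq_prod_map_map hmeas₁.aemeasurable
      hmeas₂.aemeasurable).1 hindep, hgauss₁, hgauss₂]
    exact hac.prod hac
  have hmap : Measure.map (fun ω => T (ξ₁ ω, ξ₂ ω)) μ
      = Measure.map T (Measure.map (fun ω => (ξ₁ ω, ξ₂ ω)) μ) :=
    (Measure.map_map mT (hmeas₁.prodMk hmeas₂)).symm
  rw [hmap]
  refine (hlaw.map mT).trans (Measure.AbsolutelyContinuous.mk fun S hS hS0 => ?_)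
  rw [Measure.map_apply mT hS]
  rw [Measure.volume_eq_prod] at hS0 ⊢
  rw [Measure.measure_prod_null hS] at hS0
  rw [Measure.measure_prod_null (mT hS)]
  have hN := ae_iff.1 hS0
  have hN3 := aux_affine (q + h * (Real.exp (-γ * h / 2) * p - (h / 2) * deriv U q)) (h * Γ)
    (mul_ne_zero hh.ne' hΓ0) _ (aux_abs _ hN)
  filter_upwards [measure_eq_zero_iff_ae_notMem.1 hN3] with z hz
  have hQ : Qp z = |q + h * (Real.exp (-γ * h / 2) * p - (h / 2) * deriv U q) + h * Γ * z| := by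
    rw [hQp, hQc, hP₂]; congr 1; ring
  simp only [Set.mem_setOf_eq, not_not, ← hQ] at hz
  have := aux_affine (Real.exp (-γ * h / 2) * P₄ z) Γ hΓ0 _ hz
  have he : Prod.mk z ⁻¹' (T ⁻¹' S)
      = {x : ℝ | Real.exp (-γ * h / 2) * P₄ z + Γ * x ∈ Prod.mk (Qp z) ⁻¹' S} := by
    ext x; simp [hT]
  rw [he]
  exact this
end
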